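/- Let f : ℝ × ℝ^d → ℝ^d, (θ,u) ↦ f_θ(u), be 1-periodic in θ, continuous in θ and continuously differentiable in u (jointly continuously), and set ⟨f⟩(u) = ∫₀¹ f_θ(u) dθ and g_θ(u) = ∫₀^θ ( f_τ(u) − ⟨f⟩(u) ) dτ. Then for every θ ∈ ℝ and every u ∈ ℝ^d: −∂_u g_θ(u)·g_θ(u) = ∫₀^θ ( ∂_u g_τ(u)·⟨f⟩(u) + ∂_u⟨f⟩(u)·g_τ(u) − ∂_u g_τ(u)·f_τ(u) − ∂_u f_τ(u)·g_τ(u) ) dτ. -/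

import Mathlib

/-- θ-average `⟨f⟩(u) = ∫₀¹ f_θ(u) dθ`. -/
noncomputable def thAvg (d : ℕ) (f : ℝ → (Fin d → ℝ) → (Fin d → ℝ))
    (u : Fin d → ℝ) : Fin d → ℝ :=
  ∫ τ in (0:ℝ)..1, f τ u

/-- `g_θ(u) = ∫₀^θ ( f_τ(u) − ⟨f⟩(u) ) dτ`. -/
noncomputable def gmap (d : ℕ) (f : ℝ → (Fin d → ℝ) → (Fin d → ℝ))
    (θ : ℝ) (u : Fin d → ℝ) : Fin d → ℝ :=
  ∫ τ in (0:ℝ)..θ, (f τ u - thAvg d f u)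

/-!
Put `h_θ := f_θ - ⟨f⟩`, so that `g` is the primitive of `h` in `θ` vanishing at `θ = 0`.
Differentiating under the integral sign, `∂_u g` is the primitive of `∂_u h` vanishing at `θ = 0`,
and the product rule gives `d/dθ (∂_u g_θ · g_θ) = ∂_u g_θ · h_θ + ∂_u h_θ · g_θ`. Integrate this
from `0` and expand `h` on the right by linearity.
-/

open MeasureTheory Set Topology

theorem exists_eventually_forall_norm_le_of_isCompact {X Y F : Type*} [TopologicalSpace X]
    [TopologicalSpace Y] [SeminormedAddCommGroup F] {K : Set X} (hK : IsCompact K)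
    {φ : X → Y → F} (hφ : Continuous fun p : X × Y => φ p.1 p.2) (y₀ : Y) :
    ∃ C, ∀ᶠ y in 𝓝 y₀, ∀ x ∈ K, ‖φ x y‖ ≤ C := by
  have hslice : Continuous fun x => φ x y₀ := hφ.curry_left
  obtain ⟨C, hC⟩ := hK.exists_bound_of_continuousOn hslice.continuousOn
  refine ⟨C + 1, hK.eventually_forall_of_forall_eventually fun x hx => ?_⟩
  have hnear : ∀ᶠ p : Y × X in 𝓝 (y₀, x), ‖φ p.2 p.1‖ < C + 1 :=
    (hφ.comp continuous_swap).norm.continuousAt.eventually_lt_const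
      ((hC x hx).trans_lt (lt_add_one C))
  exact hnear.mono fun _ => le_of_lt

section ParametricIntervalIntegral

variable {𝕜 H E : Type*} [RCLike 𝕜] [NormedAddCommGroup H] [NormedSpace 𝕜 H]
  [NormedAddCommGroup E] [NormedSpace ℝ E] [NormedSpace 𝕜 E]

theorem hasFDerivAt_intervalIntegral_of_continuous {μ : Measure ℝ} [IsLocallyFiniteMeasure μ]
    {F : ℝ → H → E} {F' : ℝ → H → H →L[𝕜] E} (hF : ∀ x, Continuous fun t => F t x)
    (hF' : Continuous fun p : ℝ × H => F' p.1 p.2)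
    (hderiv : ∀ t x, HasFDerivAt (F t) (F' t x) x) (a b : ℝ) (x₀ : H) :
    HasFDerivAt (fun x => ∫ t in a..b, F t x ∂μ) (∫ t in a..b, F' t x₀ ∂μ) x₀ := by
  obtain ⟨C, hC⟩ := exists_eventually_forall_norm_le_of_isCompact
    (isCompact_uIcc (a := a) (b := b)) hF' x₀
  have hF'₀ : Continuous fun t => F' t x₀ := hF'.curry_left
  exact intervalIntegral.hasFDerivAt_integral_of_dominated_of_fderiv_le
    (F := fun x t => F t x) (F' := fun x t => F' t x) (bound := fun _ => C) hC
    (.of_forall fun x => (hF x).aestronglyMeasurable)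
    ((hF x₀).intervalIntegrable a b)
    hF'₀.aestronglyMeasurable
    (.of_forall fun t ht x hx => hx t (uIoc_subset_uIcc ht))
    intervalIntegrable_const
    (.of_forall fun t _ x _ => hderiv t x)

theorem contDiff_one_intervalIntegral {μ : Measure ℝ} [IsLocallyFiniteMeasure μ]
    [NullSingletonClass μ] {F : ℝ → H → E} (hF : ∀ x, Continuous fun t => F t x)
    (hdiff : ∀ t, Differentiable 𝕜 (F t)) (hF' : Continuous fun p : ℝ × H => fderiv 𝕜 (F p.1) p.2)
    (a b : ℝ) : ContDiff 𝕜 1 fun x => ∫ t in a..b, F t x ∂μ := by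
  refine contDiff_one_iff_hasFDerivAt.2 ⟨fun x => ∫ t in a..b, fderiv 𝕜 (F t) x ∂μ, ?_, ?_⟩
  · exact intervalIntegral.continuous_parametric_intervalIntegral_of_continuous'
      (f := fun x t => fderiv 𝕜 (F t) x) (hF'.comp continuous_swap) a b
  · exact hasFDerivAt_intervalIntegral_of_continuous hF hF' (fun t x => (hdiff t x).hasFDerivAt) a b

end ParametricIntervalIntegral

/-- The primitive `θ ↦ ∫₀^θ h_τ dτ`, normalised to vanish at `θ = 0`, of a time-dependent map
`h_τ : H → E`; thus `g` is the time primitive of `f - ⟨f⟩`. -/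
noncomputable def timePrimitive {H E : Type*} [NormedAddCommGroup E] [NormedSpace ℝ E]
    (h : ℝ → H → E) (θ : ℝ) (x : H) : E :=
  ∫ τ in (0 : ℝ)..θ, h τ x

namespace timePrimitive

variable {H E : Type*} [NormedAddCommGroup E] [NormedSpace ℝ E]

theorem apply_zero (h : ℝ → H → E) (x : H) : timePrimitive h 0 x = 0 :=
  intervalIntegral.integral_same

variable [CompleteSpace E]

protected theorem hasDerivAt {h : ℝ → H → E} {x : H} (hh : Continuous fun t => h t x) (θ : ℝ) :
    HasDerivAt (fun s => timePrimitive h s x) (h θ x) θ :=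
  (hh.integral_hasStrictDerivAt 0 θ).hasDerivAt

variable [NormedAddCommGroup H] [NormedSpace ℝ H]

theorem hasDerivAt_fderiv {h : ℝ → H → E} (hh : ∀ x, Continuous fun t => h t x)
    (hdiff : ∀ t, Differentiable ℝ (h t))
    (hh' : Continuous fun p : ℝ × H => fderiv ℝ (h p.1) p.2) (θ : ℝ) (x : H) :
    HasDerivAt (fun s => fderiv ℝ (timePrimitive h s) x) (fderiv ℝ (h θ) x) θ := by
  have hfderiv (s : ℝ) : fderiv ℝ (timePrimitive h s) x =
      timePrimitive (fun t => fderiv ℝ (h t)) s x :=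
    (hasFDerivAt_intervalIntegral_of_continuous hh hh'
      (fun t y => (hdiff t y).hasFDerivAt) 0 s x).fderiv
  simp only [hfderiv]
  exact timePrimitive.hasDerivAt hh'.curry_left θ

theorem fderiv_apply_self {h : ℝ → E → E} (hh : ∀ x, Continuous fun t => h t x)
    (hdiff : ∀ t, Differentiable ℝ (h t))
    (hh' : Continuous fun p : ℝ × E => fderiv ℝ (h p.1) p.2) (θ : ℝ) (u : E) :
    fderiv ℝ (timePrimitive h θ) u (timePrimitive h θ u) =
      ∫ τ in (0 : ℝ)..θ, (fderiv ℝ (h τ) u (timePrimitive h τ u)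
        + fderiv ℝ (timePrimitive h τ) u (h τ u)) := by
  have hprim (s : ℝ) : HasDerivAt (fun s => timePrimitive h s u) (h s u) s :=
    timePrimitive.hasDerivAt (hh u) s
  have hfderiv (s : ℝ) :
      HasDerivAt (fun s => fderiv ℝ (timePrimitive h s) u) (fderiv ℝ (h s) u) s :=
    hasDerivAt_fderiv hh hdiff hh' s u
  have hprim_cont : Continuous fun s => timePrimitive h s u :=
    continuous_iff_continuousAt.2 fun s => (hprim s).continuousAt
  have hfderiv_cont : Continuous fun s => fderiv ℝ (timePrimitive h s) u :=
    continuous_iff_continuousAt.2 fun s => (hfderiv s).continuousAt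
  have hh'u : Continuous fun s => fderiv ℝ (h s) u := hh'.curry_left
  have hproduct (s : ℝ) :
      HasDerivAt (fun s => fderiv ℝ (timePrimitive h s) u (timePrimitive h s u))
        (fderiv ℝ (h s) u (timePrimitive h s u) + fderiv ℝ (timePrimitive h s) u (h s u)) s :=
    (hfderiv s).clm_apply (hprim s)
  have hproduct_cont : Continuous fun s =>
      fderiv ℝ (h s) u (timePrimitive h s u) + fderiv ℝ (timePrimitive h s) u (h s u) :=
    (hh'u.clm_apply hprim_cont).add (hfderiv_cont.clm_apply (hh u))
  rw [intervalIntegral.integral_eq_sub_of_hasDerivAt (fun s _ => hproduct s)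
    (hproduct_cont.intervalIntegrable 0 θ), apply_zero, map_zero, sub_zero]

end timePrimitive

theorem statement18_general {E : Type*} [NormedAddCommGroup E] [NormedSpace ℝ E] [CompleteSpace E]
    {f g : ℝ → E → E} {a : E → E} (hf : ∀ x, Continuous fun t => f t x)
    (hfdiff : ∀ t, Differentiable ℝ (f t))
    (hf' : Continuous fun p : ℝ × E => fderiv ℝ (f p.1) p.2) (ha : ContDiff ℝ 1 a)
    (hg : ∀ θ x, g θ x = ∫ τ in (0 : ℝ)..θ, (f τ x - a x)) (θ : ℝ) (u : E) :
    -(fderiv ℝ (g θ) u (g θ u)) =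
      ∫ τ in (0 : ℝ)..θ, (fderiv ℝ (g τ) u (a u) + fderiv ℝ a u (g τ u)
        - fderiv ℝ (g τ) u (f τ u) - fderiv ℝ (f τ) u (g τ u)) := by
  obtain rfl : g = timePrimitive fun t x => f t x - a x := funext₂ hg
  have hadiff : Differentiable ℝ a := ha.differentiable one_ne_zero
  have hfderiv_sub (t : ℝ) (x : E) :
      fderiv ℝ (fun y => f t y - a y) x = fderiv ℝ (f t) x - fderiv ℝ a x :=
    fderiv_fun_sub (hfdiff t x) (hadiff x)
  have hsub' : Continuous fun p : ℝ × E => fderiv ℝ (fun y => f p.1 y - a y) p.2 := by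
    simp only [hfderiv_sub]
    exact hf'.sub ((ha.continuous_fderiv one_ne_zero).comp continuous_snd)
  rw [timePrimitive.fderiv_apply_self (h := fun t x => f t x - a x)
    (fun x => (hf x).sub continuous_const) (fun t => (hfdiff t).sub hadiff) hsub',
    ← intervalIntegral.integral_neg]
  refine intervalIntegral.integral_congr fun τ _ => ?_
  simp only [hfderiv_sub, sub_apply, map_sub]
  abel

/-- The key expansion used to rewrite the second-order correction in Lie-bracket form:
`−∂_u g_θ(u)·g_θ(u) = ∫₀^θ ( ∂_u g_τ·⟨f⟩ + ∂_u⟨f⟩·g_τ − ∂_u g_τ·f_τ − ∂_u f_τ·g_τ ) dτ`. -/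
theorem statement18 (d : ℕ)
    (f : ℝ → (Fin d → ℝ) → (Fin d → ℝ))
    (hfper : ∀ u, Function.Periodic (fun θ => f θ u) 1)
    (hfcont : Continuous fun p : ℝ × (Fin d → ℝ) => f p.1 p.2)
    (hfdiff : ∀ θ, ContDiff ℝ 1 (f θ))
    (hfdcont : Continuous fun p : ℝ × (Fin d → ℝ) => fderiv ℝ (f p.1) p.2)
    (θ : ℝ) (u : Fin d → ℝ) :
    -(fderiv ℝ (gmap d f θ) u (gmap d f θ u)) =
      ∫ τ in (0:ℝ)..θ,
        (fderiv ℝ (gmap d f τ) u (thAvg d f u)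
          + fderiv ℝ (thAvg d f) u (gmap d f τ u)
          - fderiv ℝ (gmap d f τ) u (f τ u)
          - fderiv ℝ (f τ) u (gmap d f τ u)) := by
  have hf (x : Fin d → ℝ) : Continuous fun t => f t x := hfcont.curry_left
  have hdiff (t : ℝ) : Differentiable ℝ (f t) := (hfdiff t).differentiable one_ne_zero
  exact statement18_general hf hdiff hfdcont (contDiff_one_intervalIntegral hf hdiff hfdcont 0 1)
    (fun _ _ => rfl) θ u
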